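/- Let α ∈ (1,2), let X be a real Banach space, let f : (0,∞) → X be continuous, and suppose lim_{t→0+} t^{2-2α} f(t) = L for some L ∈ X. Then lim_{t→0+} Γ(α+1) t^{-α} J_t^{2-α} f(t) = Γ(2α-1) L, where J_t^{2-α} f(t) := (1/Γ(2-α)) ∫_0^t (t-σ)^{1-α} f(σ) dσ. -/

import Mathlib

/-!
Substituting `σ = t s` gives, for `t > 0` and `g σ = σ ^ (2 - 2α) • f σ`,
`t ^ (-α) • ∫₀ᵗ (t - σ) ^ (1 - α) • f σ dσ = ∫₀¹ (s ^ (2α - 2) * (1 - s) ^ (1 - α)) • g (t s) ds`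
(`rescaled_integral`). Since `g` tends to `L` at `0+`, it is bounded near `0+`, and the Beta
density is integrable, so dominated convergence shows that the right-hand side tends to
`B(2α - 1, 2 - α) • L`, where `B(2α - 1, 2 - α) = Γ(2α - 1) Γ(2 - α) / Γ(α + 1)`.
-/

open MeasureTheory Filter Topology Set

/-- Riemann-Liouville fractional integral of order `β` of `f` at `t`. -/
noncomputable def RLint {X : Type*} [NormedAddCommGroup X] [NormedSpace ℝ X]
    (β t : ℝ) (f : ℝ → X) : X :=
  (Real.Gamma β)⁻¹ • ∫ σ in (0:ℝ)..t, (t - σ) ^ (β - 1) • f σ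

/-- On `[0, 1]` the complex Beta integrand with real parameters is the cast of the real one. -/
lemma ofReal_beta_integrand (u v : ℝ) {x : ℝ} (hx : x ∈ Icc (0:ℝ) 1) :
    (x : ℂ) ^ ((u : ℂ) - 1) * (1 - (x : ℂ)) ^ ((v : ℂ) - 1)
      = ((x ^ (u - 1) * (1 - x) ^ (v - 1) : ℝ) : ℂ) := by
  have h : (0:ℝ) ≤ 1 - x := by linarith [hx.2]
  rw [Complex.ofReal_mul, Complex.ofReal_cpow hx.1, Complex.ofReal_cpow h]
  push_cast
  rfl

lemma intervalIntegrable_beta {u v : ℝ} (hu : 0 < u) (hv : 0 < v) :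
    IntervalIntegrable (fun x : ℝ => x ^ (u - 1) * (1 - x) ^ (v - 1)) volume 0 1 := by
  have h := Complex.betaIntegral_convergent (u := (u : ℂ)) (v := (v : ℂ)) (by simpa) (by simpa)
  rw [intervalIntegrable_iff] at h ⊢
  refine h.re.congr ?_
  refine (ae_restrict_mem measurableSet_uIoc).mono fun x hx => ?_
  rw [uIoc_of_le zero_le_one] at hx
  simp only [ofReal_beta_integrand u v (Ioc_subset_Icc_self hx)]
  exact Complex.ofReal_re _

lemma integral_beta {u v : ℝ} (hu : 0 < u) (hv : 0 < v) :
    ∫ x in (0:ℝ)..1, x ^ (u - 1) * (1 - x) ^ (v - 1)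
      = Real.Gamma u * Real.Gamma v / Real.Gamma (u + v) := by
  have h := ProbabilityTheory.beta_eq_betaIntegralReal u v hu hv
  rw [ProbabilityTheory.beta] at h
  rw [h, Complex.betaIntegral, intervalIntegral.integral_congr (g := fun x : ℝ =>
    ((x ^ (u - 1) * (1 - x) ^ (v - 1) : ℝ) : ℂ)), intervalIntegral.integral_ofReal,
    Complex.ofReal_re]
  intro x hx
  rw [uIcc_of_le zero_le_one] at hx
  exact ofReal_beta_integrand u v hx

/-- The change of variables `σ = t s`, with the weight `σ ^ (2 - 2α)` moved onto `f`. -/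
lemma rescaled_integral {X : Type*} [NormedAddCommGroup X] [NormedSpace ℝ X]
    (α : ℝ) (f : ℝ → X) {t : ℝ} (ht : 0 < t) :
    t ^ (-α) • ∫ σ in (0:ℝ)..t, (t - σ) ^ ((2 - α) - 1) • f σ
      = ∫ s in (0:ℝ)..1, (s ^ ((2 * α - 1) - 1) * (1 - s) ^ ((2 - α) - 1)) •
          ((t * s) ^ (2 - 2 * α) • f (t * s)) := by
  have h := intervalIntegral.smul_integral_comp_mul_left (a := 0) (b := 1)
    (fun σ : ℝ => (t - σ) ^ ((2 - α) - 1) • f σ) t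
  rw [mul_zero, mul_one] at h
  rw [← h, smul_smul, ← intervalIntegral.integral_smul]
  refine intervalIntegral.integral_congr_ae (Eventually.of_forall fun s hs => ?_)
  rw [uIoc_of_le zero_le_one] at hs
  have h1 : (0:ℝ) ≤ 1 - s := by linarith [hs.2]
  simp only [smul_smul]
  congr 1
  have e1 : t - t * s = t * (1 - s) := by ring
  have e2 : s ^ ((2 * α - 1) - 1) * s ^ (2 - 2 * α) = 1 := by
    rw [← Real.rpow_add hs.1]; ring_nf; simp
  have e3 : t ^ (-α) * t * t ^ ((2 - α) - 1) = t ^ (2 - 2 * α) := by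
    rw [← Real.rpow_add_one ht.ne', ← Real.rpow_add ht]; ring_nf
  rw [e1, Real.mul_rpow ht.le h1, Real.mul_rpow ht.le hs.1.le, ← e3]
  linear_combination (-(t ^ (-α) * t * t ^ ((2 - α) - 1) * (1 - s) ^ ((2 - α) - 1))) * e2

/-- If `f` is continuous on `(0,∞)` and `t^{2-2α} f(t) → L` as `t → 0+`, then
`Γ(α+1) t^{-α} J_t^{2-α} f(t) → Γ(2α-1) L` as `t → 0+`. -/
theorem limit_of_fractional_integral_two_sub_alpha
    {X : Type*} [NormedAddCommGroup X] [NormedSpace ℝ X] [CompleteSpace X]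
    (α : ℝ) (hα : α ∈ Set.Ioo (1:ℝ) 2) (f : ℝ → X) (L : X)
    (hcont : ContinuousOn f (Set.Ioi (0:ℝ)))
    (hlim : Tendsto (fun t : ℝ => t ^ (2 - 2 * α) • f t) (𝓝[>] (0:ℝ)) (𝓝 L)) :
    Tendsto (fun t : ℝ => (Real.Gamma (α + 1) * t ^ (-α)) • RLint (2 - α) t f)
      (𝓝[>] (0:ℝ)) (𝓝 (Real.Gamma (2 * α - 1) • L)) := by
  obtain ⟨hα1, hα2⟩ := hα
  have hu : 0 < 2 * α - 1 := by linarith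
  have hv : 0 < 2 - α := by linarith
  set w : ℝ → ℝ := fun s => s ^ ((2 * α - 1) - 1) * (1 - s) ^ ((2 - α) - 1) with hw
  set g : ℝ → X := fun t => t ^ (2 - 2 * α) • f t with hg
  have hwint : IntervalIntegrable w volume 0 1 := intervalIntegrable_beta hu hv
  have hgcont : ContinuousOn g (Ioi 0) :=
    (continuousOn_id.rpow_const fun x hx => Or.inl (ne_of_gt hx)).smul hcont
  have hbound : ∀ᶠ t in 𝓝[>] (0:ℝ), ‖g t‖ ≤ ‖L‖ + 1 :=
    (hlim.norm.eventually (gt_mem_nhds (lt_add_one ‖L‖))).mono fun _ h => h.le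
  obtain ⟨δ, hδ, hgδ⟩ := mem_nhdsGT_iff_exists_Ioo_subset.1 hbound
  have key : Tendsto (fun t : ℝ => ∫ s in (0:ℝ)..1, w s • g (t * s)) (𝓝[>] 0)
      (𝓝 (∫ s in (0:ℝ)..1, w s • L)) := by
    refine intervalIntegral.tendsto_integral_filter_of_dominated_convergence
      (fun s => ‖w s‖ * (‖L‖ + 1)) ?_ ?_ (hwint.norm.mul_const _) ?_
    · filter_upwards [self_mem_nhdsWithin] with t ht
      refine (intervalIntegrable_iff.1 hwint).aestronglyMeasurable.smul ?_
      refine ContinuousOn.aestronglyMeasurable ?_ measurableSet_uIoc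
      refine hgcont.comp (by fun_prop) fun s hs => ?_
      rw [uIoc_of_le zero_le_one] at hs
      exact mul_pos ht hs.1
    · filter_upwards [Ioo_mem_nhdsGT hδ] with t ht
      refine Eventually.of_forall fun s hs => ?_
      rw [uIoc_of_le zero_le_one] at hs
      rw [norm_smul]
      refine mul_le_mul_of_nonneg_left (hgδ ⟨mul_pos ht.1 hs.1, ?_⟩) (norm_nonneg _)
      exact (mul_le_of_le_one_right ht.1.le hs.2).trans_lt ht.2
    · refine Eventually.of_forall fun s hs => ?_
      rw [uIoc_of_le zero_le_one] at hs
      refine (hlim.comp ?_).const_smul (w s)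
      refine tendsto_nhdsWithin_iff.2 ⟨?_, ?_⟩
      · have : Tendsto (fun t : ℝ => t * s) (𝓝 0) (𝓝 (0 * s)) :=
          (continuous_id.mul continuous_const).tendsto 0
        rw [zero_mul] at this
        exact this.mono_left nhdsWithin_le_nhds
      · filter_upwards [self_mem_nhdsWithin] with t ht using mul_pos ht hs.1
  have hI : ∫ s in (0:ℝ)..1, w s • L
      = (Real.Gamma (2 * α - 1) * Real.Gamma (2 - α) / Real.Gamma (α + 1)) • L := by
    rw [intervalIntegral.integral_smul_const, integral_beta hu hv]
    ring_nf
  rw [hI] at key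
  have h1 : Real.Gamma (α + 1) ≠ 0 := (Real.Gamma_pos_of_pos (by linarith)).ne'
  have h2 : Real.Gamma (2 - α) ≠ 0 := (Real.Gamma_pos_of_pos hv).ne'
  have key' := key.const_smul (Real.Gamma (α + 1) * (Real.Gamma (2 - α))⁻¹)
  rw [smul_smul] at key'
  have h3 : Real.Gamma (α + 1) * (Real.Gamma (2 - α))⁻¹ *
      (Real.Gamma (2 * α - 1) * Real.Gamma (2 - α) / Real.Gamma (α + 1))
      = Real.Gamma (2 * α - 1) := by field_simp
  rw [h3] at key'
  refine key'.congr' ?_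
  filter_upwards [self_mem_nhdsWithin] with t ht
  rw [RLint, ← rescaled_integral α f ht, smul_smul, smul_smul]
  congr 1
  ring
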